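/- Let α > 0, Λ > 1, ε ∈ (0,1), K ≥ 1, L > 0, and let x₁, …, x_K ∈ ℝ^d with clusters taken at scale Lε. Let R : ℝ^d × ℝ^d → ℝ satisfy the standing covariance bound with parameters (α, Λ, ε). Then for every graph 𝓔 (multiplicities on unordered pairs of indices, no self-loops) all of whose edges join indices lying in different clusters, and for every choice of representatives u*(S) ∈ S of the clusters, one has ∏_{i<j} R(x_i, x_j)^{𝓔(i,j)} ≤ ((2K)^α Λ²)^{N} · ∏_{i<j} R(x_{u*(c(i))}, x_{u*(c(j))})^{𝓔(i,j)}, where c(i) denotes the cluster containing i and N = Σ_{i<j} 𝓔(i,j) is the total number of edges counted with multiplicity. -/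

import Mathlib

open MeasureTheory Filter

noncomputable section

def anorm {d : ℕ} (s : Fin d → ℝ) (x : Fin d → ℝ) : ℝ :=
  ∑ j, |x j| ^ (1 / s j)

def CovBound {d : ℕ} (s : Fin d → ℝ) (α Λ ε : ℝ)
    (R : (Fin d → ℝ) → (Fin d → ℝ) → ℝ) : Prop :=
  ∀ x y, ε ^ α / (Λ * (anorm s (x - y) + ε) ^ α) ≤ R x y ∧
    R x y ≤ Λ * ε ^ α / (anorm s (x - y) + ε) ^ α

/-- `j` and `j'` lie in the same cluster of the points `x` at scale `δ`:
there is a finite chain of jumps of size `≤ δ` connecting them. -/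
def SameCluster {d K : ℕ} (s : Fin d → ℝ) (δ : ℝ) (x : Fin K → Fin d → ℝ) :
    Fin K → Fin K → Prop :=
  Relation.ReflTransGen fun i j => anorm s (x i - x j) ≤ δ

def pairs (K : ℕ) : Finset (Fin K × Fin K) :=
  Finset.univ.filter fun p => p.1 < p.2

theorem anorm_nonneg {d : ℕ} (s x : Fin d → ℝ) : 0 ≤ anorm s x :=
  Finset.sum_nonneg fun _ _ => Real.rpow_nonneg (abs_nonneg _) _

theorem anorm_zero {d : ℕ} {s : Fin d → ℝ} (hs : ∀ j, 1 ≤ s j) : anorm s 0 = 0 := by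
  refine Finset.sum_eq_zero fun j _ => ?_
  have hj : 1 / s j ≠ 0 := one_div_ne_zero (by linarith [hs j])
  rw [Pi.zero_apply, abs_zero, Real.zero_rpow hj]

theorem anorm_sub_comm {d : ℕ} (s x y : Fin d → ℝ) : anorm s (x - y) = anorm s (y - x) := by
  simp only [anorm, Pi.sub_apply, abs_sub_comm]

theorem anorm_add_le {d : ℕ} {s : Fin d → ℝ} (hs : ∀ j, 1 ≤ s j) (x y : Fin d → ℝ) :
    anorm s (x + y) ≤ anorm s x + anorm s y := by
  rw [anorm, anorm, anorm, ← Finset.sum_add_distrib]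
  refine Finset.sum_le_sum fun j _ => ?_
  have hj : 0 < s j := by linarith [hs j]
  calc |(x + y) j| ^ (1 / s j) ≤ (|x j| + |y j|) ^ (1 / s j) :=
        Real.rpow_le_rpow (abs_nonneg _) (abs_add_le _ _) (by positivity)
    _ ≤ |x j| ^ (1 / s j) + |y j| ^ (1 / s j) :=
        Real.rpow_add_le_add_rpow (abs_nonneg _) (abs_nonneg _) (by positivity)
          ((div_le_one hj).2 (hs j))

theorem anorm_sub_le {d : ℕ} {s : Fin d → ℝ} (hs : ∀ j, 1 ≤ s j) (x y z : Fin d → ℝ) :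
    anorm s (x - z) ≤ anorm s (x - y) + anorm s (y - z) := by
  simpa using anorm_add_le hs (x - y) (y - z)

/-- The graph on indices joining distinct points at distance at most `δ`. -/
def proximityGraph {d K : ℕ} (s : Fin d → ℝ) (δ : ℝ) (x : Fin K → Fin d → ℝ) :
    SimpleGraph (Fin K) where
  Adj i j := i ≠ j ∧ anorm s (x i - x j) ≤ δ
  symm := ⟨fun _ _ h => ⟨h.1.symm, by rw [anorm_sub_comm]; exact h.2⟩⟩
  loopless := ⟨fun _ h => h.1 rfl⟩

theorem SameCluster.reachable {d K : ℕ} {s : Fin d → ℝ} {δ : ℝ} {x : Fin K → Fin d → ℝ}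
    {i j : Fin K} (h : SameCluster s δ x i j) : (proximityGraph s δ x).Reachable i j := by
  induction h with
  | refl => rfl
  | @tail b c _ hbc ih =>
    by_cases hne : b = c
    · exact hne ▸ ih
    · exact ih.trans (SimpleGraph.Adj.reachable ⟨hne, hbc⟩)

theorem anorm_sub_le_length_mul {d K : ℕ} {s : Fin d → ℝ} (hs : ∀ j, 1 ≤ s j) {δ : ℝ}
    {x : Fin K → Fin d → ℝ} {i j : Fin K} (w : (proximityGraph s δ x).Walk i j) :
    anorm s (x i - x j) ≤ w.length * δ := by
  induction w with
  | nil => simp [anorm_zero hs]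
  | @cons a b c hab w ih =>
    have := anorm_sub_le hs (x a) (x b) (x c)
    have := hab.2
    rw [SimpleGraph.Walk.length_cons]
    push_cast
    linarith

theorem SameCluster.anorm_sub_le {d K : ℕ} {s : Fin d → ℝ} (hs : ∀ j, 1 ≤ s j) {δ : ℝ}
    (hδ : 0 ≤ δ) {x : Fin K → Fin d → ℝ} {i j : Fin K} (h : SameCluster s δ x i j) :
    anorm s (x i - x j) ≤ (K - 1) * δ := by
  obtain ⟨w, hw⟩ := h.reachable.exists_isPath
  refine (anorm_sub_le_length_mul hs w).trans (mul_le_mul_of_nonneg_right ?_ hδ)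
  have hlt := hw.length_lt
  rw [Fintype.card_fin] at hlt
  have : (w.length : ℝ) + 1 ≤ K := by exact_mod_cast hlt
  linarith

/-- Moving two points of different clusters within their clusters multiplies their distance by
at most `2 * K`. -/
theorem anorm_sub_le_of_not_sameCluster {d K : ℕ} {s : Fin d → ℝ} (hs : ∀ j, 1 ≤ s j) {δ : ℝ}
    (hδ : 0 ≤ δ) {x : Fin K → Fin d → ℝ} {i j i' j' : Fin K} (hij : ¬ SameCluster s δ x i j)
    (hi : SameCluster s δ x i i') (hj : SameCluster s δ x j j') :
    anorm s (x i' - x j') ≤ 2 * K * anorm s (x i - x j) := by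
  have hlt : δ < anorm s (x i - x j) := not_le.1 fun h => hij (.single h)
  have hK : (1 : ℝ) ≤ K := by exact_mod_cast i.pos
  have h₁ := _root_.anorm_sub_le hs (x i') (x i) (x j')
  have h₂ := _root_.anorm_sub_le hs (x i) (x j) (x j')
  have h₃ := hi.anorm_sub_le hs hδ
  have h₄ := hj.anorm_sub_le hs hδ
  rw [anorm_sub_comm] at h₃
  have h₅ : (K - 1 : ℝ) * δ ≤ (K - 1) * anorm s (x i - x j) :=
    mul_le_mul_of_nonneg_left hlt.le (by linarith)
  linarith

theorem CovBound.nonneg {d : ℕ} {s : Fin d → ℝ} {α Λ ε : ℝ} (hΛ : 0 ≤ Λ) (hε : 0 ≤ ε)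
    {R : (Fin d → ℝ) → (Fin d → ℝ) → ℝ} (hR : CovBound s α Λ ε R) (y z : Fin d → ℝ) :
    0 ≤ R y z := by
  have := anorm_nonneg s (y - z)
  exact le_trans (by positivity) (hR y z).1

theorem CovBound.le_mul {d : ℕ} {s : Fin d → ℝ} {α Λ ε c : ℝ} (hα : 0 ≤ α) (hΛ : 0 < Λ)
    (hε : 0 < ε) (hc : 1 ≤ c) {R : (Fin d → ℝ) → (Fin d → ℝ) → ℝ} (hR : CovBound s α Λ ε R)
    {y z y' z' : Fin d → ℝ} (h : anorm s (y' - z') ≤ c * anorm s (y - z)) :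
    R y z ≤ c ^ α * Λ ^ 2 * R y' z' := by
  have hpos : 0 < anorm s (y - z) + ε := by linarith [anorm_nonneg s (y - z)]
  have hpos' : 0 < anorm s (y' - z') + ε := by linarith [anorm_nonneg s (y' - z')]
  have hpow : (anorm s (y' - z') + ε) ^ α ≤ c ^ α * (anorm s (y - z) + ε) ^ α := by
    rw [← Real.mul_rpow (by linarith) hpos.le]
    exact Real.rpow_le_rpow hpos'.le (by nlinarith) hα
  calc R y z ≤ Λ * ε ^ α / (anorm s (y - z) + ε) ^ α := (hR y z).2
    _ ≤ c ^ α * Λ * ε ^ α / (anorm s (y' - z') + ε) ^ α := by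
        rw [div_le_div_iff₀ (by positivity) (by positivity)]
        calc Λ * ε ^ α * (anorm s (y' - z') + ε) ^ α
            ≤ Λ * ε ^ α * (c ^ α * (anorm s (y - z) + ε) ^ α) := by gcongr
          _ = _ := by ring
    _ = c ^ α * Λ ^ 2 * (ε ^ α / (Λ * (anorm s (y' - z') + ε) ^ α)) := by
        field_simp
    _ ≤ c ^ α * Λ ^ 2 * R y' z' := by
        gcongr
        exact (hR y' z').1

/-- Proposition 2.4: replacing every endpoint of a cross-cluster graph by
the representative of its cluster costs at most a factor `(2K)^α Λ²` per edge. -/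
theorem stmt7 (d : ℕ) (hd : 1 ≤ d) (s : Fin d → ℝ) (hs : ∀ j, 1 ≤ s j)
    (α Λ ε : ℝ) (hα : 0 < α) (hΛ : 1 < Λ) (hε : ε ∈ Set.Ioo (0:ℝ) 1)
    (K : ℕ) (hK : 1 ≤ K) (L : ℝ) (hL : 0 < L)
    (x : Fin K → Fin d → ℝ)
    (R : (Fin d → ℝ) → (Fin d → ℝ) → ℝ) (hR : CovBound s α Λ ε R)
    (𝓔 : Fin K → Fin K → ℕ) (hsymm : ∀ i j, 𝓔 i j = 𝓔 j i) (hdiag : ∀ i, 𝓔 i i = 0)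
    (hcross : ∀ i j, 0 < 𝓔 i j → ¬ SameCluster s (L * ε) x i j)
    (u : Fin K → Fin K)
    (hu1 : ∀ i, SameCluster s (L * ε) x i (u i))
    (hu2 : ∀ i j, SameCluster s (L * ε) x i j → u i = u j) :
    ∏ p ∈ pairs K, R (x p.1) (x p.2) ^ 𝓔 p.1 p.2 ≤
      ((2 * (K : ℝ)) ^ α * Λ ^ 2) ^ (∑ p ∈ pairs K, 𝓔 p.1 p.2) *
        ∏ p ∈ pairs K, R (x (u p.1)) (x (u p.2)) ^ 𝓔 p.1 p.2 := by
  rw [← Finset.prod_pow_eq_pow_sum, ← Finset.prod_mul_distrib]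
  have hΛ0 : 0 < Λ := by linarith
  refine Finset.prod_le_prod (fun p _ => pow_nonneg (hR.nonneg hΛ0.le hε.1.le _ _) _)
    fun p _ => ?_
  rcases Nat.eq_zero_or_pos (𝓔 p.1 p.2) with h0 | hpos
  · simp [h0]
  rw [← mul_pow]
  refine pow_le_pow_left₀ (hR.nonneg hΛ0.le hε.1.le _ _) ?_ _
  have hK' : (1 : ℝ) ≤ K := by exact_mod_cast hK
  exact hR.le_mul hα.le hΛ0 hε.1 (by linarith)
    (anorm_sub_le_of_not_sameCluster hs (mul_pos hL hε.1).le (hcross _ _ hpos) (hu1 _) (hu1 _))
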